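/- arXiv:1011.0233 — 3 statements merged into one kernel-verified Lean document; each statement's English description precedes it below -/
import Mathlib

section
/- Let a and b be connected regions. (i) If a W:O b and b E:SE:S:O a, then (a, b) ∈ o⊗f, i.e. x⁻(a) < x⁻(b) < x⁺(a) < x⁺(b), y⁻(b) < y⁻(a), and y⁺(a) = y⁺(b). (ii) If a S:SW:W:O b and b E:O a, then (a, b) ∈ o⊗fi, i.e. x⁻(a) < x⁻(b) < x⁺(a) < x⁺(b), y⁻(a) < y⁻(b), and y⁺(a) = y⁺(b). -/
/-!
The proof only uses the extremal coordinates of the two regions. Since the interior of a region is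
open, each point of it lies strictly inside the bounding rectangle, so every tile that `interior a`
meets yields a strict inequality between an endpoint of `a` and one of `b`
(`xm_lt_of_mem_interior` and its companions). Conversely, if `interior a` meets none of the
three northern tiles of `b`, then it lies below the line `y = y⁺(b)`, and so does its closure `a`;
this gives `y⁺(a) ≤ y⁺(b)` (`yp_le_of_cdc`). In both parts neither region meets a northern tile of
the other, hence `y⁺(a) = y⁺(b)`, and the strict inequalities are read off from the tiles that are
met.
-/

open Set

/-- A "region" variable ranges over subsets of the plane ℝ². -/
abbrev Reg : Type := Set (ℝ × ℝ)

/-- `x⁻(a)`: infimum of first coordinates of points of `a`. -/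
noncomputable def xm (a : Reg) : ℝ := sInf (Prod.fst '' a)
/-- `x⁺(a)`: supremum of first coordinates of points of `a`. -/
noncomputable def xp (a : Reg) : ℝ := sSup (Prod.fst '' a)
/-- `y⁻(a)`: infimum of second coordinates of points of `a`. -/
noncomputable def ym (a : Reg) : ℝ := sInf (Prod.snd '' a)
/-- `y⁺(a)`: supremum of second coordinates of points of `a`. -/
noncomputable def yp (a : Reg) : ℝ := sSup (Prod.snd '' a)

/-- `I_x(a) = [x⁻(a), x⁺(a)]`. -/
noncomputable def Ix (a : Reg) : Set ℝ := Icc (xm a) (xp a)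
/-- `I_y(a) = [y⁻(a), y⁺(a)]`. -/
noncomputable def Iy (a : Reg) : Set ℝ := Icc (ym a) (yp a)
/-- Minimum bounding rectangle `M(a) = I_x(a) × I_y(a)`. -/
noncomputable def MBR (a : Reg) : Reg := Ix a ×ˢ Iy a

/-- The nine tile names. -/
inductive Tile : Type
  | NW | N | NE | W | O | E | SW | S | SE
  deriving DecidableEq

/-- The nine tiles of a region `b`. -/
noncomputable def Tile.region : Tile → Reg → Reg
  | .O,  b => Ix b ×ˢ Iy b
  | .N,  b => Ix b ×ˢ Ici (yp b)
  | .S,  b => Ix b ×ˢ Iic (ym b)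
  | .E,  b => Ici (xp b) ×ˢ Iy b
  | .W,  b => Iic (xm b) ×ˢ Iy b
  | .NE, b => Ici (xp b) ×ˢ Ici (yp b)
  | .NW, b => Iic (xm b) ×ˢ Ici (yp b)
  | .SE, b => Ici (xp b) ×ˢ Iic (ym b)
  | .SW, b => Iic (xm b) ×ˢ Iic (ym b)

/-- The basic CDC constraint `a T b`: the set of tile names `χ` with
`interior a ∩ χ(b) ≠ ∅` is exactly `T`. -/
def cdc (a : Reg) (T : Set Tile) (b : Reg) : Prop :=
  ∀ χ : Tile, (interior a ∩ χ.region b).Nonempty ↔ χ ∈ T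

/-- A region: a nonempty bounded regular closed subset of the plane. -/
def IsRegion (a : Reg) : Prop :=
  a.Nonempty ∧ Bornology.IsBounded a ∧ a = closure (interior a)

/-- A connected region: a region whose interior is connected. -/
def IsConnRegion (a : Reg) : Prop :=
  IsRegion a ∧ IsConnected (interior a)

/-- An axis-parallel (nondegenerate, closed) rectangle. -/
def IsRect (a : Reg) : Prop :=
  ∃ x1 x2 y1 y2 : ℝ, x1 < x2 ∧ y1 < y2 ∧ a = Icc x1 x2 ×ˢ Icc y1 y2

/- Basic IA relations on intervals given by their endpoint pairs. -/
def RAs  (I J : ℝ × ℝ) : Prop := I.1 = J.1 ∧ I.2 < J.2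
def RAf  (I J : ℝ × ℝ) : Prop := J.1 < I.1 ∧ I.2 = J.2
def RAsi (I J : ℝ × ℝ) : Prop := RAs J I
def RAfi (I J : ℝ × ℝ) : Prop := RAf J I
def RAo  (I J : ℝ × ℝ) : Prop := I.1 < J.1 ∧ J.1 < I.2 ∧ I.2 < J.2
def RAeq (I J : ℝ × ℝ) : Prop := I = J

/-- `(a, b) ∈ α⊗β`: `I_x(a) α I_x(b)` and `I_y(a) β I_y(b)`. -/
def RA (α β : ℝ × ℝ → ℝ × ℝ → Prop) (a b : Reg) : Prop :=
  α (xm a, xp a) (xm b, xp b) ∧ β (ym a, yp a) (ym b, yp b)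

/-- `a` is vertical w.r.t. `b`: `(a, b) ∈ s⊗fi`. -/
def Vert (a b : Reg) : Prop := RA RAs RAfi a b
/-- `a` is horizontal w.r.t. `b`: `(a, b) ∈ si⊗f`. -/
def Horiz (a b : Reg) : Prop := RA RAsi RAf a b
/-- The upper-left-corner relation `⌜(a,b)`. -/
def ULC (a b : Reg) : Prop := Vert a b ∨ Horiz a b

/-- The network `N_⌜(u, v; w₁, w₂)`. -/
def NetULC (u v w1 w2 : Reg) : Prop :=
  cdc u {Tile.O} w1 ∧ cdc w1 {Tile.E, Tile.SE, Tile.S, Tile.O} u ∧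
  cdc v {Tile.O} w1 ∧ cdc w1 {Tile.E, Tile.SE, Tile.S} v ∧
  cdc v {Tile.O} w2 ∧ cdc w2 {Tile.E, Tile.SE, Tile.S, Tile.O} v ∧
  cdc u {Tile.O} w2 ∧ cdc w2 {Tile.E, Tile.SE, Tile.S} u

/-- The network `N_∥(u, v; w)`. -/
def NetPar (u v w : Reg) : Prop :=
  cdc u {Tile.E} w ∧ cdc w {Tile.E} v ∧ cdc v {Tile.W} u

/-- The network `N_p` for a propositional variable `p`, over the regions
`u_p, u_{¬p}, f_p, f_{¬p}, f_p⁰` and six auxiliary regions. -/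
def NetP (up unp fp fnp fp0 a1 a2 b1 b2 c1 c2 : Reg) : Prop :=
  cdc up {Tile.O} fnp ∧ cdc fp {Tile.O} unp ∧
  NetULC up fp a1 a2 ∧ NetULC unp fnp b1 b2 ∧ NetULC up unp c1 c2 ∧
  cdc fp {Tile.O} fnp ∧ cdc fnp {Tile.E, Tile.SE, Tile.S, Tile.O} fp ∧
  cdc unp {Tile.O} fp0 ∧ cdc fp0 {Tile.E, Tile.SE, Tile.S, Tile.O} unp ∧
  cdc fnp {Tile.O} fp0 ∧ cdc fp0 {Tile.E, Tile.SE, Tile.S, Tile.O} fnp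

/-- The reference network `N_ref`. -/
def NetRef (wref fref fnref f0ref : Reg) : Prop :=
  cdc wref {Tile.O} fref ∧ cdc fref {Tile.O} fnref ∧ cdc fnref {Tile.O} f0ref ∧
  cdc f0ref {Tile.S, Tile.O} fnref ∧ cdc fnref {Tile.S, Tile.O} fref ∧
  cdc fref {Tile.S, Tile.O} wref

/-- An assignment of regions to all variables of the network `N_V`
(for propositional variables `p_1, …, p_n`):
`u i, un i, f i, fn i, f0 i` are `u_i, u_{¬i}, f_i, f_{¬i}, f_i⁰`;
`a1 i, a2 i, b1 i, b2 i, c1 i, c2 i` are the six auxiliary regions of `N_{p_i}`;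
`wref, fref, fnref, f0ref` are the reference regions; and
`pf i, pfn i, pf0 i` are the auxiliary regions of the parallel networks
linking `f_i` (resp. `f_{¬i}`, `f_i⁰`) to its predecessor. -/
structure VAssign (n : ℕ) where
  (u un f fn f0 : Fin n → Reg)
  (a1 a2 b1 b2 c1 c2 : Fin n → Reg)
  (wref fref fnref f0ref : Reg)
  (pf pfn pf0 : Fin n → Reg)

/-- The predecessor in a chain: `g (i-1)` if `i > 0`, else the default `d`. -/
def prevOr {n : ℕ} (g : Fin n → Reg) (d : Reg) (i : Fin n) : Reg :=
  if 0 < i.val then g ⟨i.val - 1, lt_of_le_of_lt (Nat.sub_le _ _) i.isLt⟩ else d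

/-- All the constraints of the network `N_V` hold. -/
def VAssign.Holds {n : ℕ} (S : VAssign n) : Prop :=
  (∀ i, NetP (S.u i) (S.un i) (S.f i) (S.fn i) (S.f0 i)
      (S.a1 i) (S.a2 i) (S.b1 i) (S.b2 i) (S.c1 i) (S.c2 i)) ∧
  NetRef S.wref S.fref S.fnref S.f0ref ∧
  (∀ i, NetPar (S.f i) (prevOr S.f S.fref i) (S.pf i)) ∧
  (∀ i, NetPar (S.fn i) (prevOr S.fn S.fnref i) (S.pfn i)) ∧
  (∀ i, NetPar (S.f0 i) (prevOr S.f0 S.f0ref i) (S.pf0 i))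

/-- Every region of the assignment is a connected region. -/
def VAssign.AllConn {n : ℕ} (S : VAssign n) : Prop :=
  (∀ i, IsConnRegion (S.u i) ∧ IsConnRegion (S.un i) ∧ IsConnRegion (S.f i) ∧
     IsConnRegion (S.fn i) ∧ IsConnRegion (S.f0 i) ∧ IsConnRegion (S.a1 i) ∧
     IsConnRegion (S.a2 i) ∧ IsConnRegion (S.b1 i) ∧ IsConnRegion (S.b2 i) ∧
     IsConnRegion (S.c1 i) ∧ IsConnRegion (S.c2 i) ∧ IsConnRegion (S.pf i) ∧
     IsConnRegion (S.pfn i) ∧ IsConnRegion (S.pf0 i)) ∧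
  IsConnRegion S.wref ∧ IsConnRegion S.fref ∧ IsConnRegion S.fnref ∧
  IsConnRegion S.f0ref

/-- Every region of the assignment is an axis-parallel rectangle. -/
def VAssign.AllRect {n : ℕ} (S : VAssign n) : Prop :=
  (∀ i, IsRect (S.u i) ∧ IsRect (S.un i) ∧ IsRect (S.f i) ∧
     IsRect (S.fn i) ∧ IsRect (S.f0 i) ∧ IsRect (S.a1 i) ∧
     IsRect (S.a2 i) ∧ IsRect (S.b1 i) ∧ IsRect (S.b2 i) ∧
     IsRect (S.c1 i) ∧ IsRect (S.c2 i) ∧ IsRect (S.pf i) ∧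
     IsRect (S.pfn i) ∧ IsRect (S.pf0 i)) ∧
  IsRect S.wref ∧ IsRect S.fref ∧ IsRect S.fnref ∧ IsRect S.f0ref

/-- A clause `c = p_r* ∨ p_s* ∨ p_t*` with `r < s < t`; the Booleans record
whether each literal is positive (`true`) or negative (`false`). -/
structure Clause (n : ℕ) where
  r : Fin n
  s : Fin n
  t : Fin n
  hrs : r < s
  hst : s < t
  sr : Bool
  ss : Bool
  st : Bool

/-- An assignment of regions to the fresh variables of a clause network `N_c`:
`vc, w₀, w_rs, w_st, w₁` plus the two auxiliary regions `pa, pb` of the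
parallel networks for `w₀` and `w₁`. -/
structure CAssign where
  vc : Reg
  w0 : Reg
  wrs : Reg
  wst : Reg
  w1 : Reg
  pa : Reg
  pb : Reg

/-- `u_i*`: `u_i` for a positive literal and `u_{¬i}` for a negative one. -/
def ustar {n : ℕ} (S : VAssign n) (i : Fin n) (sign : Bool) : Reg :=
  if sign then S.u i else S.un i

/-- The frame of literal `p_i*`: `f_i` for a positive literal, `f_{¬i}` otherwise. -/
def fstar {n : ℕ} (S : VAssign n) (i : Fin n) (sign : Bool) : Reg :=
  if sign then S.f i else S.fn i

/-- All the constraints of the clause network `N_c` (including those of `N_V`). -/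
def NetC {n : ℕ} (S : VAssign n) (c : Clause n) (C : CAssign) : Prop :=
  S.Holds ∧
  NetPar C.w0 S.wref C.pa ∧ NetPar C.w1 S.wref C.pb ∧
  cdc C.w0 {Tile.W, Tile.O} (S.f c.r) ∧
  cdc (S.f c.r) {Tile.E, Tile.SE, Tile.S, Tile.O} C.w0 ∧
  (if c.sr then
    cdc (S.f c.r) {Tile.W, Tile.O} C.wrs ∧ cdc C.wrs {Tile.E, Tile.O} (S.f c.r)
   else
    cdc (S.fn c.r) {Tile.S, Tile.SW, Tile.W, Tile.O} C.wrs ∧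
    cdc C.wrs {Tile.E, Tile.O} (S.fn c.r)) ∧
  cdc C.wrs {Tile.W, Tile.O} (S.f c.s) ∧ cdc (S.f c.s) {Tile.E, Tile.O} C.wrs ∧
  (if c.ss then
    cdc (S.f c.s) {Tile.W, Tile.O} C.wst ∧ cdc C.wst {Tile.E, Tile.O} (S.f c.s)
   else
    cdc (S.fn c.s) {Tile.S, Tile.SW, Tile.W, Tile.O} C.wst ∧
    cdc C.wst {Tile.E, Tile.O} (S.fn c.s)) ∧
  cdc C.wst {Tile.W, Tile.O} (S.f c.t) ∧ cdc (S.f c.t) {Tile.E, Tile.O} C.wst ∧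
  (if c.st then
    cdc (S.f c.t) {Tile.S, Tile.SW, Tile.W, Tile.O} C.w1 ∧
    cdc C.w1 {Tile.E, Tile.O} (S.f c.t)
   else
    cdc (S.fn c.t) {Tile.S, Tile.SW, Tile.W, Tile.O} C.w1 ∧
    cdc C.w1 {Tile.E, Tile.O} (S.fn c.t)) ∧
  cdc C.w0 {Tile.O} C.vc ∧
  cdc (ustar S c.r c.sr) {Tile.O} C.vc ∧
  cdc C.wrs {Tile.O} C.vc ∧
  cdc (ustar S c.s c.ss) {Tile.O} C.vc ∧
  cdc C.wst {Tile.O} C.vc ∧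
  cdc (ustar S c.t c.st) {Tile.O} C.vc ∧
  cdc C.w1 {Tile.O} C.vc ∧
  cdc C.vc {Tile.E, Tile.SE, Tile.S} C.w0 ∧
  cdc C.vc {Tile.S, Tile.SW, Tile.W} C.w1 ∧
  cdc C.vc {Tile.E, Tile.SE, Tile.S, Tile.SW, Tile.W} (ustar S c.r c.sr) ∧
  cdc C.vc {Tile.E, Tile.SE, Tile.S, Tile.SW, Tile.W} C.wrs ∧
  cdc C.vc {Tile.E, Tile.SE, Tile.S, Tile.SW, Tile.W} (ustar S c.s c.ss) ∧
  cdc C.vc {Tile.E, Tile.SE, Tile.S, Tile.SW, Tile.W} C.wst ∧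
  cdc C.vc {Tile.E, Tile.SE, Tile.S, Tile.SW, Tile.W} (ustar S c.t c.st)

/-- Every clause region is a connected region. -/
def CAssign.AllConn (C : CAssign) : Prop :=
  IsConnRegion C.vc ∧ IsConnRegion C.w0 ∧ IsConnRegion C.wrs ∧
  IsConnRegion C.wst ∧ IsConnRegion C.w1 ∧ IsConnRegion C.pa ∧ IsConnRegion C.pb

/-- Every clause region except `v_c` is an axis-parallel rectangle. -/
def CAssign.RectExceptVc (C : CAssign) : Prop :=
  IsRect C.w0 ∧ IsRect C.wrs ∧ IsRect C.wst ∧ IsRect C.w1 ∧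
  IsRect C.pa ∧ IsRect C.pb

/-- An interior point of a set of reals bounded below lies strictly above its infimum. -/
lemma sInf_lt_of_mem_interior {s : Set ℝ} (hs : BddBelow s) {t : ℝ} (ht : t ∈ interior s) :
    sInf s < t := by
  obtain ⟨l, u, htlu, hsub⟩ := mem_nhds_iff_exists_Ioo_subset.1 (mem_interior_iff_mem_nhds.1 ht)
  obtain ⟨r, hlr, hrt⟩ := exists_between htlu.1
  exact (csInf_le hs (hsub ⟨hlr, hrt.trans htlu.2⟩)).trans_lt hrt

lemma lt_sSup_of_mem_interior {s : Set ℝ} (hs : BddAbove s) {t : ℝ} (ht : t ∈ interior s) :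
    t < sSup s := by
  obtain ⟨l, u, htlu, hsub⟩ := mem_nhds_iff_exists_Ioo_subset.1 (mem_interior_iff_mem_nhds.1 ht)
  obtain ⟨r, htr, hru⟩ := exists_between htlu.2
  exact htr.trans_le (le_csSup hs (hsub ⟨htlu.1.trans htr, hru⟩))

lemma fst_mem_interior {a : Reg} {p : ℝ × ℝ} (hp : p ∈ interior a) :
    p.1 ∈ interior (Prod.fst '' a) :=
  isOpenMap_fst.image_interior_subset a (mem_image_of_mem _ hp)

lemma snd_mem_interior {a : Reg} {p : ℝ × ℝ} (hp : p ∈ interior a) :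
    p.2 ∈ interior (Prod.snd '' a) :=
  isOpenMap_snd.image_interior_subset a (mem_image_of_mem _ hp)

lemma xm_lt_of_mem_interior {a : Reg} (ha : IsRegion a) {p : ℝ × ℝ} (hp : p ∈ interior a) :
    xm a < p.1 :=
  sInf_lt_of_mem_interior ha.2.1.image_fst.bddBelow (fst_mem_interior hp)

lemma lt_xp_of_mem_interior {a : Reg} (ha : IsRegion a) {p : ℝ × ℝ} (hp : p ∈ interior a) :
    p.1 < xp a :=
  lt_sSup_of_mem_interior ha.2.1.image_fst.bddAbove (fst_mem_interior hp)

lemma ym_lt_of_mem_interior {a : Reg} (ha : IsRegion a) {p : ℝ × ℝ} (hp : p ∈ interior a) :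
    ym a < p.2 :=
  sInf_lt_of_mem_interior ha.2.1.image_snd.bddBelow (snd_mem_interior hp)

/-- If `interior a` meets none of the northern tiles of `b`, then `a` does not rise above `b`. -/
lemma yp_le_of_cdc {a b : Reg} {T : Set Tile} (ha : IsRegion a) (h : cdc a T b)
    (hN : Tile.N ∉ T) (hNW : Tile.NW ∉ T) (hNE : Tile.NE ∉ T) : yp a ≤ yp b := by
  have hint : interior a ⊆ {p | p.2 ≤ yp b} := by
    intro p hp
    by_contra hlt
    have hy : yp b ≤ p.2 := (not_le.1 hlt).le
    rcases le_total p.1 (xm b) with h1 | h1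
    · exact hNW ((h .NW).1 ⟨p, hp, h1, hy⟩)
    rcases le_total p.1 (xp b) with h2 | h2
    · exact hN ((h .N).1 ⟨p, hp, ⟨h1, h2⟩, hy⟩)
    · exact hNE ((h .NE).1 ⟨p, hp, h2, hy⟩)
  have hsub : a ⊆ {p | p.2 ≤ yp b} := by
    rw [ha.2.2]
    exact closure_minimal hint (isClosed_le continuous_snd continuous_const)
  refine csSup_le (ha.1.image _) ?_
  rintro _ ⟨p, hp, rfl⟩
  exact hsub hp

/-- (i) If connected regions satisfy `a W:O b` and `b E:SE:S:O a`,
then `(a, b) ∈ o⊗f`. (ii) If they satisfy `a S:SW:W:O b` and `b E:O a`, then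
`(a, b) ∈ o⊗fi`. -/
theorem stmt3 (a b : Reg) (ha : IsConnRegion a) (hb : IsConnRegion b) :
    ((cdc a {Tile.W, Tile.O} b ∧ cdc b {Tile.E, Tile.SE, Tile.S, Tile.O} a) →
      RA RAo RAf a b ∧
      (xm a < xm b ∧ xm b < xp a ∧ xp a < xp b ∧ ym b < ym a ∧ yp a = yp b)) ∧
    ((cdc a {Tile.S, Tile.SW, Tile.W, Tile.O} b ∧ cdc b {Tile.E, Tile.O} a) →
      RA RAo RAfi a b ∧
      (xm a < xm b ∧ xm b < xp a ∧ xp a < xp b ∧ ym a < ym b ∧ yp a = yp b)) := by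
  obtain ⟨ha, -⟩ := ha
  obtain ⟨hb, -⟩ := hb
  refine ⟨?_, ?_⟩
  · rintro ⟨hab, hba⟩
    have hyp : yp a = yp b :=
      le_antisymm (yp_le_of_cdc ha hab (by simp) (by simp) (by simp))
        (yp_le_of_cdc hb hba (by simp) (by simp) (by simp))
    obtain ⟨p, hp, hpW⟩ := (hab .W).2 (by simp)
    obtain ⟨q, hq, hqO⟩ := (hab .O).2 (by simp)
    obtain ⟨r, hr, hrE⟩ := (hba .E).2 (by simp)
    obtain ⟨s, hs, hsS⟩ := (hba .S).2 (by simp)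
    have h1 : xm a < xm b := (xm_lt_of_mem_interior ha hp).trans_le hpW.1
    have h2 : xm b < xp a := hqO.1.1.trans_lt (lt_xp_of_mem_interior ha hq)
    have h3 : xp a < xp b := lt_of_le_of_lt hrE.1 (lt_xp_of_mem_interior hb hr)
    have h4 : ym b < ym a := (ym_lt_of_mem_interior hb hs).trans_le hsS.2
    exact ⟨⟨⟨h1, h2, h3⟩, h4, hyp⟩, h1, h2, h3, h4, hyp⟩
  · rintro ⟨hab, hba⟩
    have hyp : yp a = yp b :=
      le_antisymm (yp_le_of_cdc ha hab (by simp) (by simp) (by simp))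
        (yp_le_of_cdc hb hba (by simp) (by simp) (by simp))
    obtain ⟨p, hp, hpW⟩ := (hab .W).2 (by simp)
    obtain ⟨q, hq, hqO⟩ := (hab .O).2 (by simp)
    obtain ⟨r, hr, hrE⟩ := (hba .E).2 (by simp)
    obtain ⟨s, hs, hsS⟩ := (hab .S).2 (by simp)
    have h1 : xm a < xm b := (xm_lt_of_mem_interior ha hp).trans_le hpW.1
    have h2 : xm b < xp a := hqO.1.1.trans_lt (lt_xp_of_mem_interior ha hq)
    have h3 : xp a < xp b := lt_of_le_of_lt hrE.1 (lt_xp_of_mem_interior hb hr)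
    have h4 : ym a < ym b := (ym_lt_of_mem_interior ha hs).trans_le hsS.2
    exact ⟨⟨⟨h1, h2, h3⟩, h4, hyp.symm⟩, h1, h2, h3, h4, hyp⟩
end

section
/- Let a and b be connected regions with x⁺(b) < x⁻(a) and I_y(a) = I_y(b) (a is right-side parallel with gap to b). Then the basic CDC constraint b W a holds, and there exists a connected region c such that the basic CDC constraints a E c and c E b hold. Hence the right-side-parallel-with-gap relation is exactly the relation entailed by the network {u E w, w E v, v W u} with w existentially quantified. -/
/-!
For regions, a single-tile constraint is a statement about minimum bounding rectangles alone:
`a E c` holds iff `x⁺(c) ≤ x⁻(a)` and `I_y(a) ⊆ I_y(c)` (`cdc_E_iff`), and symmetrically for `W`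
(`cdc_W_iff`). Indeed the interior of a region lies in the open bounding rectangle
(`IsRegion.interior_subset`), which gives one direction; conversely, the nine tiles cover the plane,
so a constraint with a single tile puts the interior of the region, hence by regularity and
closedness of tiles the whole region, into that tile.

If `x⁺(b) < x⁻(a)` and `I_y(a) = I_y(b)`, the rectangle `[x⁺(b), x⁻(a)] × I_y(a)` filling the gap
serves as `c`. Conversely `a E c`, `c E b`, `b W a` give
`x⁺(b) ≤ x⁻(c) < x⁺(c) ≤ x⁻(a)` and `I_y(a) ⊆ I_y(c) ⊆ I_y(b) ⊆ I_y(a)`.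
-/

open Set

/-! ### Bounding rectangles -/

lemma IsRegion.subset_MBR {a : Reg} (ha : IsRegion a) : a ⊆ MBR a := by
  obtain ⟨-, hbd, -⟩ := ha
  have hx := hbd.image_fst
  have hy := hbd.image_snd
  intro p hp
  exact ⟨⟨csInf_le hx.bddBelow (mem_image_of_mem _ hp), le_csSup hx.bddAbove (mem_image_of_mem _ hp)⟩,
    ⟨csInf_le hy.bddBelow (mem_image_of_mem _ hp), le_csSup hy.bddAbove (mem_image_of_mem _ hp)⟩⟩

lemma IsRegion.interior_subset {a : Reg} (ha : IsRegion a) :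
    interior a ⊆ Ioo (xm a) (xp a) ×ˢ Ioo (ym a) (yp a) := by
  have h := interior_mono ha.subset_MBR
  simpa only [MBR, Ix, Iy, interior_prod_eq, interior_Icc] using h

lemma IsRegion.interior_nonempty {a : Reg} (ha : IsRegion a) : (interior a).Nonempty := by
  obtain ⟨hne, -, hreg⟩ := ha
  rw [hreg] at hne
  exact closure_nonempty_iff.mp hne

lemma IsRegion.xm_lt_xp {a : Reg} (ha : IsRegion a) : xm a < xp a := by
  obtain ⟨p, hp⟩ := ha.interior_nonempty
  have h := ha.interior_subset hp
  exact h.1.1.trans h.1.2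

lemma IsRegion.ym_lt_yp {a : Reg} (ha : IsRegion a) : ym a < yp a := by
  obtain ⟨p, hp⟩ := ha.interior_nonempty
  have h := ha.interior_subset hp
  exact h.2.1.trans h.2.2

/-! ### Single-tile constraints -/

lemma Tile.isClosed_region (χ : Tile) (b : Reg) : IsClosed (χ.region b) := by
  cases χ <;>
    first
      | exact isClosed_Icc.prod isClosed_Icc
      | exact isClosed_Icc.prod isClosed_Ici
      | exact isClosed_Icc.prod isClosed_Iic
      | exact isClosed_Ici.prod isClosed_Icc
      | exact isClosed_Iic.prod isClosed_Icc
      | exact isClosed_Ici.prod isClosed_Ici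
      | exact isClosed_Iic.prod isClosed_Ici
      | exact isClosed_Ici.prod isClosed_Iic
      | exact isClosed_Iic.prod isClosed_Iic

lemma exists_mem_tile (b : Reg) (p : ℝ × ℝ) : ∃ χ : Tile, p ∈ χ.region b := by
  rcases le_total p.1 (xm b) with hx | hx
  · rcases le_total p.2 (ym b) with hy | hy
    · exact ⟨.SW, hx, hy⟩
    rcases le_total p.2 (yp b) with hy' | hy'
    · exact ⟨.W, hx, hy, hy'⟩
    · exact ⟨.NW, hx, hy'⟩
  rcases le_total p.1 (xp b) with hx' | hx'
  · rcases le_total p.2 (ym b) with hy | hy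
    · exact ⟨.S, ⟨hx, hx'⟩, hy⟩
    rcases le_total p.2 (yp b) with hy' | hy'
    · exact ⟨.O, ⟨hx, hx'⟩, hy, hy'⟩
    · exact ⟨.N, ⟨hx, hx'⟩, hy'⟩
  · rcases le_total p.2 (ym b) with hy | hy
    · exact ⟨.SE, hx', hy⟩
    rcases le_total p.2 (yp b) with hy' | hy'
    · exact ⟨.E, hx', hy, hy'⟩
    · exact ⟨.NE, hx', hy'⟩

/-- A region satisfying a single-tile constraint lies entirely in that tile. -/
lemma subset_tile_of_cdc {a b : Reg} {χ : Tile} (ha : IsRegion a) (h : cdc a {χ} b) :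
    a ⊆ χ.region b := by
  rw [ha.2.2]
  refine closure_minimal (fun p hp => ?_) (χ.isClosed_region b)
  obtain ⟨ψ, hψ⟩ := exists_mem_tile b p
  have hmem : ψ ∈ ({χ} : Set Tile) := (h ψ).mp ⟨p, hp, hψ⟩
  rw [mem_singleton_iff] at hmem
  exact hmem ▸ hψ

lemma cdc_singleton {a b : Reg} {χ : Tile} (ha : IsRegion a)
    (hmem : ∀ p ∈ interior a, p ∈ χ.region b)
    (huniq : ∀ p ∈ interior a, ∀ ψ : Tile, p ∈ ψ.region b → ψ = χ) : cdc a {χ} b := by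
  intro ψ
  constructor
  · rintro ⟨p, hp, hpψ⟩
    exact huniq p hp ψ hpψ
  · rintro rfl
    obtain ⟨p, hp⟩ := ha.interior_nonempty
    exact ⟨p, hp, hmem p hp⟩

lemma cdc_E_iff {a c : Reg} (ha : IsRegion a) (hc : IsRegion c) :
    cdc a {Tile.E} c ↔ xp c ≤ xm a ∧ ym c ≤ ym a ∧ yp a ≤ yp c := by
  constructor
  · intro h
    have hsub := subset_tile_of_cdc ha h
    have hx := ha.1.image Prod.fst
    have hy := ha.1.image Prod.snd
    refine ⟨le_csInf hx ?_, le_csInf hy ?_, csSup_le hy ?_⟩ <;> rintro _ ⟨p, hp, rfl⟩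
    exacts [(hsub hp).1, (hsub hp).2.1, (hsub hp).2.2]
  · rintro ⟨h1, h2, h3⟩
    have hcx := hc.xm_lt_xp
    refine cdc_singleton ha (fun p hp => ?_) (fun p hp ψ hψ => ?_) <;>
      obtain ⟨⟨_, _⟩, _, _⟩ := ha.interior_subset hp
    · exact ⟨by simp only [mem_Ici]; linarith, by linarith, by linarith⟩
    · cases ψ <;> first
        | rfl
        | (simp only [Tile.region, Ix, Iy, mem_prod, mem_Icc, mem_Ici, mem_Iic] at hψ
           exfalso; grind)

lemma cdc_W_iff {b a : Reg} (hb : IsRegion b) (ha : IsRegion a) :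
    cdc b {Tile.W} a ↔ xp b ≤ xm a ∧ ym a ≤ ym b ∧ yp b ≤ yp a := by
  constructor
  · intro h
    have hsub := subset_tile_of_cdc hb h
    have hx := hb.1.image Prod.fst
    have hy := hb.1.image Prod.snd
    refine ⟨csSup_le hx ?_, le_csInf hy ?_, csSup_le hy ?_⟩ <;> rintro _ ⟨p, hp, rfl⟩
    exacts [(hsub hp).1, (hsub hp).2.1, (hsub hp).2.2]
  · rintro ⟨h1, h2, h3⟩
    have hax := ha.xm_lt_xp
    refine cdc_singleton hb (fun p hp => ?_) (fun p hp ψ hψ => ?_) <;>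
      obtain ⟨⟨_, _⟩, _, _⟩ := hb.interior_subset hp
    · exact ⟨by simp only [mem_Iic]; linarith, by linarith, by linarith⟩
    · cases ψ <;> first
        | rfl
        | (simp only [Tile.region, Ix, Iy, mem_prod, mem_Icc, mem_Ici, mem_Iic] at hψ
           exfalso; grind)

/-! ### The rectangle filling the gap -/

lemma rect_isConnRegion {x1 x2 y1 y2 : ℝ} (hx : x1 < x2) (hy : y1 < y2) :
    IsConnRegion (Icc x1 x2 ×ˢ Icc y1 y2) := by
  refine ⟨⟨?_, ?_, ?_⟩, ?_⟩
  · exact (nonempty_Icc.mpr hx.le).prod (nonempty_Icc.mpr hy.le)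
  · exact (Metric.isBounded_Icc x1 x2).prod (Metric.isBounded_Icc y1 y2)
  · rw [interior_prod_eq, interior_Icc, interior_Icc, closure_prod_eq, closure_Ioo hx.ne,
      closure_Ioo hy.ne]
  · rw [interior_prod_eq, interior_Icc, interior_Icc]
    exact (isConnected_Ioo hx).prod (isConnected_Ioo hy)

lemma rect_bounds {x1 x2 y1 y2 : ℝ} (hx : x1 ≤ x2) (hy : y1 ≤ y2) :
    xm (Icc x1 x2 ×ˢ Icc y1 y2) = x1 ∧ xp (Icc x1 x2 ×ˢ Icc y1 y2) = x2 ∧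
    ym (Icc x1 x2 ×ˢ Icc y1 y2) = y1 ∧ yp (Icc x1 x2 ×ˢ Icc y1 y2) = y2 := by
  simp only [xm, xp, ym, yp, fst_image_prod _ (nonempty_Icc.mpr hy),
    snd_image_prod (nonempty_Icc.mpr hx), csInf_Icc hx, csSup_Icc hx, csInf_Icc hy, csSup_Icc hy,
    and_self]

lemma exists_region_between {a b : Reg} (ha : IsRegion a) (hb : IsRegion b)
    (h1 : xp b < xm a) (h2 : ym a = ym b) (h3 : yp a = yp b) :
    ∃ c : Reg, IsConnRegion c ∧ cdc a {Tile.E} c ∧ cdc c {Tile.E} b := by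
  have hy := ha.ym_lt_yp
  have hc := rect_isConnRegion h1 hy
  obtain ⟨e1, e2, e3, e4⟩ := rect_bounds h1.le hy.le
  refine ⟨_, hc, (cdc_E_iff ha hc.1).mpr ?_, (cdc_E_iff hc.1 hb).mpr ?_⟩
  · exact ⟨e2.le, e3.le, e4.ge⟩
  · exact ⟨e1.ge, by linarith, by linarith⟩

/-- If connected regions `a, b` satisfy `x⁺(b) < x⁻(a)` and
`I_y(a) = I_y(b)`, then `b W a` holds and there is a connected region `c`
with `a E c` and `c E b`.  Hence the right-side-parallel-with-gap relation is
exactly the relation entailed by the network `{u E w, w E v, v W u}` with `w`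
existentially quantified. -/
theorem stmt5 (a b : Reg) (ha : IsConnRegion a) (hb : IsConnRegion b)
    (h1 : xp b < xm a) (h2 : ym a = ym b) (h3 : yp a = yp b) :
    (cdc b {Tile.W} a ∧
      ∃ c : Reg, IsConnRegion c ∧ cdc a {Tile.E} c ∧ cdc c {Tile.E} b) ∧
    (∀ a' b' : Reg, IsConnRegion a' → IsConnRegion b' →
      ((xp b' < xm a' ∧ ym a' = ym b' ∧ yp a' = yp b') ↔
        (∃ c : Reg, IsConnRegion c ∧
          cdc a' {Tile.E} c ∧ cdc c {Tile.E} b' ∧ cdc b' {Tile.W} a'))) := by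
  have hW : ∀ {a b : Reg}, IsRegion a → IsRegion b → xp b < xm a → ym a = ym b → yp a = yp b →
      cdc b {Tile.W} a := fun ha hb h1 h2 h3 =>
    (cdc_W_iff hb ha).mpr ⟨h1.le, h2.le, h3.ge⟩
  refine ⟨⟨hW ha.1 hb.1 h1 h2 h3, exists_region_between ha.1 hb.1 h1 h2 h3⟩, ?_⟩
  intro a' b' ha' hb'
  constructor
  · rintro ⟨h1, h2, h3⟩
    obtain ⟨c, hc, hac, hcb⟩ := exists_region_between ha'.1 hb'.1 h1 h2 h3
    exact ⟨c, hc, hac, hcb, hW ha'.1 hb'.1 h1 h2 h3⟩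
  · rintro ⟨c, hc, hac, hcb, hba⟩
    obtain ⟨p1, p2, p3⟩ := (cdc_E_iff ha'.1 hc.1).mp hac
    obtain ⟨q1, q2, q3⟩ := (cdc_E_iff hc.1 hb'.1).mp hcb
    obtain ⟨r1, r2, r3⟩ := (cdc_W_iff hb'.1 ha'.1).mp hba
    have hcx := hc.1.xm_lt_xp
    exact ⟨by linarith, by linarith, by linarith⟩
end

section
/- (The upper-left-corner relation is definable in the CDC.) For connected regions a and b, ⌜(a, b) holds if and only if there exist connected regions c₁, c₂ such that all eight basic CDC constraints of N_⌜(a, b; c₁, c₂) hold. -/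
/-!
Both directions only involve bounding rectangles.

From the network to the corner relation: `w₁ E:SE:S:O u` puts `w₁` to the right of `x⁻(u)` and below
`y⁺(u)`, while `u O w₁` gives the opposite inequalities; so `u` and `w₁` share `x⁻` and `y⁺`, and
likewise `v` and `w₁` (`corner_eq_of_cdc`). Since `w₁` meets the tile `O(u)` and misses `O(v)`, the
rectangle `M(u)` is not contained in `M(v)`; `w₂` gives the converse non-inclusion
(`not_MBR_subset_of_cdc`). Two rectangles with the same upper left corner, neither containing the
other, are in the relation `⌜`.

From the corner relation to the network: take for `w₁` an L-shaped region (`Lshape`) wrapping around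
the lower and right sides of `M(v)`, and reaching beyond `M(u)` to the right and below; take for
`w₂` the same with the roles of `u` and `v` exchanged.
-/

open Set

/-! ### Bounding rectangles -/

lemma exists_box_of_mem_interior {a : Reg} {p : ℝ × ℝ} (hp : p ∈ interior a) :
    ∃ ε > 0, ∀ s t : ℝ, |s| ≤ ε → |t| ≤ ε → (p.1 + s, p.2 + t) ∈ a := by
  obtain ⟨δ, hδ, h⟩ := Metric.isOpen_iff.1 isOpen_interior p hp
  refine ⟨δ / 2, by positivity, fun s t hs ht => interior_subset (h ?_)⟩
  rw [Metric.mem_ball, Prod.dist_eq, max_lt_iff]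
  simp only [Real.dist_eq, add_sub_cancel_left]
  constructor <;> linarith

lemma mem_MBR_of_mem {a : Reg} (ha : IsRegion a) {p : ℝ × ℝ} (hp : p ∈ a) :
    xm a ≤ p.1 ∧ p.1 ≤ xp a ∧ ym a ≤ p.2 ∧ p.2 ≤ yp a := by
  have h1 := ha.2.1.image_fst
  have h2 := ha.2.1.image_snd
  exact ⟨csInf_le h1.bddBelow (mem_image_of_mem _ hp), le_csSup h1.bddAbove (mem_image_of_mem _ hp),
    csInf_le h2.bddBelow (mem_image_of_mem _ hp), le_csSup h2.bddAbove (mem_image_of_mem _ hp)⟩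

lemma lt_of_mem_interior {a : Reg} (ha : IsRegion a) {p : ℝ × ℝ} (hp : p ∈ interior a) :
    xm a < p.1 ∧ p.1 < xp a ∧ ym a < p.2 ∧ p.2 < yp a := by
  obtain ⟨ε, hε, h⟩ := exists_box_of_mem_interior hp
  have hm : |(-ε)| ≤ ε := by rw [abs_neg, abs_of_pos hε]
  have hpl : |ε| ≤ ε := (abs_of_pos hε).le
  have h1 := mem_MBR_of_mem ha (h (-ε) (-ε) hm hm)
  have h2 := mem_MBR_of_mem ha (h ε ε hpl hpl)
  simp only at h1 h2
  refine ⟨?_, ?_, ?_, ?_⟩ <;> linarith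

lemma IsRegion.extent_lt {a : Reg} (ha : IsRegion a) : xm a < xp a ∧ ym a < yp a := by
  obtain ⟨p, hp⟩ := ha.interior_nonempty
  have := lt_of_mem_interior ha hp
  exact ⟨this.1.trans this.2.1, this.2.2.1.trans this.2.2.2⟩

/-- A closed constraint on the interior of a region passes to the region itself. -/
lemma IsRegion.subset_of_interior_subset {a s : Reg} (ha : IsRegion a) (hs : IsClosed s)
    (h : interior a ⊆ s) : a ⊆ s := by
  rw [ha.2.2]
  exact closure_minimal h hs

/-! ### The network implies the corner relation -/

lemma exists_tile (b : Reg) (hb : IsRegion b) (p : ℝ × ℝ) : ∃ χ : Tile, p ∈ χ.region b := by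
  have := hb.extent_lt
  rcases le_total p.1 (xm b) with h1 | h1 <;> rcases le_total p.1 (xp b) with h2 | h2 <;>
    rcases le_total p.2 (ym b) with h3 | h3 <;> rcases le_total p.2 (yp b) with h4 | h4 <;>
    first
    | exact ⟨.SW, h1, h3⟩
    | exact ⟨.W, h1, h3, h4⟩
    | exact ⟨.NW, h1, h4⟩
    | exact ⟨.SE, h2, h3⟩
    | exact ⟨.E, h2, h3, h4⟩
    | exact ⟨.NE, h2, h4⟩
    | exact ⟨.S, ⟨h1, h2⟩, h3⟩
    | exact ⟨.O, ⟨h1, h2⟩, h3, h4⟩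
    | exact ⟨.N, ⟨h1, h2⟩, h4⟩

lemma MBR_subset_of_cdc_O {a c : Reg} (ha : IsRegion a) (hc : IsRegion c)
    (h : cdc a {Tile.O} c) :
    xm c ≤ xm a ∧ xp a ≤ xp c ∧ ym c ≤ ym a ∧ yp a ≤ yp c := by
  have hsub : a ⊆ Ix c ×ˢ Iy c := by
    refine ha.subset_of_interior_subset (isClosed_Icc.prod isClosed_Icc) fun p hp => ?_
    obtain ⟨χ, hχ⟩ := exists_tile c hc p
    obtain rfl : χ = Tile.O := (h χ).1 ⟨p, hp, hχ⟩
    exact hχ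
  refine ⟨le_csInf (ha.1.image _) ?_, csSup_le (ha.1.image _) ?_, le_csInf (ha.1.image _) ?_,
    csSup_le (ha.1.image _) ?_⟩ <;> rintro _ ⟨p, hp, rfl⟩
  exacts [(hsub hp).1.1, (hsub hp).1.2, (hsub hp).2.1, (hsub hp).2.2]

lemma corner_le_of_cdc {a c : Reg} {T : Set Tile} (ha : IsRegion a) (hc : IsRegion c)
    (hT : T ⊆ {Tile.E, Tile.SE, Tile.S, Tile.O}) (h : cdc c T a) :
    xm a ≤ xm c ∧ yp c ≤ yp a := by
  have hlt := ha.extent_lt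
  have hsub : c ⊆ Ici (xm a) ×ˢ Iic (yp a) := by
    refine hc.subset_of_interior_subset (isClosed_Ici.prod isClosed_Iic) fun p hp => ?_
    obtain ⟨χ, hχ⟩ := exists_tile a ha p
    have hmem := hT ((h χ).1 ⟨p, hp, hχ⟩)
    simp only [mem_insert_iff, mem_singleton_iff] at hmem
    rcases hmem with rfl | rfl | rfl | rfl
    · exact ⟨hlt.1.le.trans hχ.1, hχ.2.2⟩
    · exact ⟨hlt.1.le.trans hχ.1, le_trans hχ.2 hlt.2.le⟩
    · exact ⟨hχ.1.1, le_trans hχ.2 hlt.2.le⟩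
    · exact ⟨hχ.1.1, hχ.2.2⟩
  refine ⟨le_csInf (hc.1.image _) ?_, csSup_le (hc.1.image _) ?_⟩ <;> rintro _ ⟨p, hp, rfl⟩
  exacts [(hsub hp).1, (hsub hp).2]

lemma corner_eq_of_cdc {a c : Reg} {T : Set Tile} (ha : IsRegion a) (hc : IsRegion c)
    (hT : T ⊆ {Tile.E, Tile.SE, Tile.S, Tile.O}) (h : cdc a {Tile.O} c) (h' : cdc c T a) :
    xm a = xm c ∧ yp a = yp c := by
  have h1 := MBR_subset_of_cdc_O ha hc h
  have h2 := corner_le_of_cdc ha hc hT h'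
  exact ⟨le_antisymm h2.1 h1.1, le_antisymm h1.2.2.2 h2.2⟩

lemma not_MBR_subset_of_cdc {a b c : Reg} {T T' : Set Tile} (hT : Tile.O ∈ T) (hT' : Tile.O ∉ T')
    (h : cdc c T a) (h' : cdc c T' b) : ¬ MBR a ⊆ MBR b := by
  intro hsub
  obtain ⟨p, hp, hpa⟩ := (h .O).2 hT
  exact hT' ((h' .O).1 ⟨p, hp, hsub hpa⟩)

lemma ULC_of_NetULC {a b c₁ c₂ : Reg} (ha : IsRegion a) (hb : IsRegion b)
    (hc₁ : IsRegion c₁) (h : NetULC a b c₁ c₂) : ULC a b := by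
  obtain ⟨h1, h2, h3, h4, -, h6, -, h8⟩ := h
  have hT : ({Tile.E, Tile.SE, Tile.S} : Set Tile) ⊆ {Tile.E, Tile.SE, Tile.S, Tile.O} := by
    intro χ; simp only [mem_insert_iff, mem_singleton_iff]; tauto
  have ea := corner_eq_of_cdc ha hc₁ subset_rfl h1 h2
  have eb := corner_eq_of_cdc hb hc₁ hT h3 h4
  have ex : xm a = xm b := ea.1.trans eb.1.symm
  have ey : yp a = yp b := ea.2.trans eb.2.symm
  have nab : ¬ MBR a ⊆ MBR b := not_MBR_subset_of_cdc (by simp) (by simp) h2 h4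
  have nba : ¬ MBR b ⊆ MBR a := not_MBR_subset_of_cdc (by simp) (by simp) h6 h8
  have kab : xp b < xp a ∨ ym a < ym b := by
    by_contra! hcon
    exact nab (prod_mono (Icc_subset_Icc ex.ge hcon.1) (Icc_subset_Icc hcon.2 ey.le))
  have kba : xp a < xp b ∨ ym b < ym a := by
    by_contra! hcon
    exact nba (prod_mono (Icc_subset_Icc ex.le hcon.1) (Icc_subset_Icc hcon.2 ey.ge))
  rcases kab with k | k
  · have k' : ym b < ym a := kba.resolve_left k.not_gt
    exact Or.inr ⟨⟨ex.symm, k⟩, k', ey⟩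
  · have k' : xp a < xp b := kba.resolve_right k.not_gt
    exact Or.inl ⟨⟨ex, k'⟩, k, ey.symm⟩

/-! ### L-shaped regions -/

/-- The rectangle `[x₀, X] × [Y, y₂]` with its upper left part `[x₀, x₁] × [y₁, y₂]` cut out,
written as the union of its two arms. -/
def Lshape (x₀ x₁ X Y y₁ y₂ : ℝ) : Reg :=
  Icc x₀ X ×ˢ Icc Y y₁ ∪ Icc x₁ X ×ˢ Icc Y y₂

section Lshape

variable {x₀ x₁ X Y y₁ y₂ : ℝ}

lemma mem_interior_Lshape (hx : x₀ < x₁) (hy : y₁ < y₂) {p : ℝ × ℝ} :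
    p ∈ interior (Lshape x₀ x₁ X Y y₁ y₂) ↔
      (p.1 ∈ Ioo x₀ X ∧ p.2 ∈ Ioo Y y₁) ∨ (p.1 ∈ Ioo x₁ X ∧ p.2 ∈ Ioo Y y₂) := by
  constructor
  · intro hp
    obtain ⟨ε, hε, h⟩ := exists_box_of_mem_interior hp
    have hm : |(-ε)| ≤ ε := by rw [abs_neg, abs_of_pos hε]
    have hpl : |ε| ≤ ε := (abs_of_pos hε).le
    have h1 := h (-ε) (-ε) hm hm
    have h2 := h ε ε hpl hpl
    -- The upper left neighbour of `p` rules out the reentrant corner of the L.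
    have h3 := h (-ε) ε hm hpl
    simp only [Lshape, mem_union, mem_prod, mem_Icc] at h1 h2 h3
    simp only [mem_Ioo]
    rcases h3 with h3 | h3
    · left
      refine ⟨⟨?_, ?_⟩, ?_, ?_⟩ <;>
        rcases h1 with h1 | h1 <;> rcases h2 with h2 | h2 <;> linarith
    · right
      refine ⟨⟨?_, ?_⟩, ?_, ?_⟩ <;>
        rcases h1 with h1 | h1 <;> rcases h2 with h2 | h2 <;> linarith
  · rintro (h | h)
    · exact interior_maximal
        (t := Ioo x₀ X ×ˢ Ioo Y y₁)
        ((prod_mono Ioo_subset_Icc_self Ioo_subset_Icc_self).trans subset_union_left)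
        (isOpen_Ioo.prod isOpen_Ioo) h
    · exact interior_maximal
        (t := Ioo x₁ X ×ˢ Ioo Y y₂)
        ((prod_mono Ioo_subset_Icc_self Ioo_subset_Icc_self).trans subset_union_right)
        (isOpen_Ioo.prod isOpen_Ioo) h

lemma interior_Lshape (hx : x₀ < x₁) (hy : y₁ < y₂) :
    interior (Lshape x₀ x₁ X Y y₁ y₂) = Ioo x₀ X ×ˢ Ioo Y y₁ ∪ Ioo x₁ X ×ˢ Ioo Y y₂ := by
  ext p
  exact mem_interior_Lshape hx hy

lemma isConnRegion_Lshape (hx : x₀ < x₁) (hX : x₁ < X) (hY : Y < y₁) (hy : y₁ < y₂) :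
    IsConnRegion (Lshape x₀ x₁ X Y y₁ y₂) := by
  refine ⟨⟨?_, ?_, ?_⟩, ?_⟩
  · exact ⟨(X, Y), Or.inl ⟨⟨(hx.trans hX).le, le_rfl⟩, le_rfl, hY.le⟩⟩
  · exact ((Metric.isBounded_Icc _ _).prod (Metric.isBounded_Icc _ _)).union
      ((Metric.isBounded_Icc _ _).prod (Metric.isBounded_Icc _ _))
  · rw [interior_Lshape hx hy, closure_union, closure_prod_eq, closure_prod_eq,
      closure_Ioo (hx.trans hX).ne, closure_Ioo hY.ne, closure_Ioo hX.ne,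
      closure_Ioo (hY.trans hy).ne, Lshape]
  · rw [interior_Lshape hx hy]
    obtain ⟨s, hs⟩ := exists_between hX
    obtain ⟨t, ht⟩ := exists_between hY
    refine IsConnected.union ⟨(s, t), ⟨⟨hx.trans hs.1, hs.2⟩, ht⟩, hs, ht.1, ht.2.trans hy⟩
      ((isConnected_Ioo (hx.trans hX)).prod (isConnected_Ioo hY))
      ((isConnected_Ioo hX).prod (isConnected_Ioo (hY.trans hy)))

lemma extent_Lshape (hx : x₀ < x₁) (hX : x₁ < X) (hY : Y < y₁) (hy : y₁ < y₂) :
    xm (Lshape x₀ x₁ X Y y₁ y₂) = x₀ ∧ xp (Lshape x₀ x₁ X Y y₁ y₂) = X ∧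
      ym (Lshape x₀ x₁ X Y y₁ y₂) = Y ∧ yp (Lshape x₀ x₁ X Y y₁ y₂) = y₂ := by
  have hlow : (x₀, Y) ∈ Lshape x₀ x₁ X Y y₁ y₂ :=
    Or.inl ⟨⟨le_rfl, (hx.trans hX).le⟩, le_rfl, hY.le⟩
  have hupp : (X, y₂) ∈ Lshape x₀ x₁ X Y y₁ y₂ :=
    Or.inr ⟨⟨hX.le, le_rfl⟩, (hY.trans hy).le, le_rfl⟩
  have hbox : ∀ p ∈ Lshape x₀ x₁ X Y y₁ y₂, x₀ ≤ p.1 ∧ p.1 ≤ X ∧ Y ≤ p.2 ∧ p.2 ≤ y₂ := by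
    rintro p (⟨⟨h1, h2⟩, h3, h4⟩ | ⟨⟨h1, h2⟩, h3, h4⟩)
    · exact ⟨h1, h2, h3, h4.trans hy.le⟩
    · exact ⟨hx.le.trans h1, h2, h3, h4⟩
  refine ⟨IsLeast.csInf_eq ⟨⟨_, hlow, rfl⟩, ?_⟩, IsGreatest.csSup_eq ⟨⟨_, hupp, rfl⟩, ?_⟩,
    IsLeast.csInf_eq ⟨⟨_, hlow, rfl⟩, ?_⟩, IsGreatest.csSup_eq ⟨⟨_, hupp, rfl⟩, ?_⟩⟩ <;>
    rintro _ ⟨p, hp, rfl⟩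
  exacts [(hbox p hp).1, (hbox p hp).2.1, (hbox p hp).2.2.1, (hbox p hp).2.2.2]

end Lshape

/-! ### The corner relation implies the network -/

lemma cdc_O_of_MBR_subset {a c : Reg} (ha : IsRegion a) (h1 : xm c ≤ xm a) (h2 : xp a ≤ xp c)
    (h3 : ym c ≤ ym a) (h4 : yp a ≤ yp c) : cdc a {Tile.O} c := by
  intro χ
  rw [mem_singleton_iff]
  constructor
  · rintro ⟨p, hp, hχ⟩
    have hlt := lt_of_mem_interior ha hp
    cases χ <;> simp only [Tile.region, mem_prod, Ix, Iy, mem_Icc, mem_Ici, mem_Iic] at hχ <;>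
      first | rfl | (exfalso; linarith [hχ.1, hχ.2])
  · rintro rfl
    obtain ⟨p, hp⟩ := ha.interior_nonempty
    have hlt := lt_of_mem_interior ha hp
    refine ⟨p, hp, ⟨?_, ?_⟩, ?_, ?_⟩ <;> linarith

/-- Tiles of `a` met by an L wrapped around a rectangle `[x⁻(a), x₁] × [y₁, y⁺(a)]` that shares its
upper left corner with `M(a)`: always `E`, `SE`, `S`, never a tile above or to the left of `a`. -/
lemma cdc_Lshape_aux {a : Reg} (ha : IsRegion a) {x₁ X Y y₁ : ℝ} {T : Set Tile}
    (hx : xm a < x₁) (hy : y₁ < yp a) (hX : x₁ < X) (hY : Y < y₁) (haX : xp a < X)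
    (haY : Y < ym a) (hT : T \ {Tile.O} = {Tile.E, Tile.SE, Tile.S})
    (hO : (interior (Lshape (xm a) x₁ X Y y₁ (yp a)) ∩ Tile.O.region a).Nonempty ↔ Tile.O ∈ T) :
    cdc (Lshape (xm a) x₁ X Y y₁ (yp a)) T a := by
  intro χ
  by_cases hχO : χ = Tile.O
  · rw [hχO]; exact hO
  have hmem : χ ∈ T ↔ χ ∈ ({Tile.E, Tile.SE, Tile.S} : Set Tile) := by
    rw [← hT, mem_sdiff, mem_singleton_iff, and_iff_left hχO]
  rw [hmem]
  have hlt := ha.extent_lt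
  constructor
  · rintro ⟨p, hp, hχ⟩
    rw [mem_interior_Lshape hx hy] at hp
    have hp' : xm a < p.1 ∧ p.2 < yp a := by
      rcases hp with ⟨⟨h1, -⟩, -, h2⟩ | ⟨⟨h1, -⟩, -, h2⟩ <;> constructor <;> linarith
    cases χ <;> simp only [Tile.region, mem_prod, Ix, Iy, mem_Icc, mem_Ici, mem_Iic] at hχ <;>
      first | exact absurd rfl hχO | (exfalso; linarith [hχ.1, hχ.2]) | simp
  · -- Sample coordinates: `s` right of both rectangles, `t` below both, `u`, `v` inside `M(a)`.
    obtain ⟨s, hs, hsX⟩ := exists_between (max_lt hX haX)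
    obtain ⟨t, htY, ht⟩ := exists_between (lt_min hY haY)
    obtain ⟨u, hu, hu'⟩ := exists_between hlt.1
    obtain ⟨v, hv, hv'⟩ := exists_between hlt.2
    rw [max_lt_iff] at hs
    rw [lt_min_iff] at ht
    simp only [mem_insert_iff, mem_singleton_iff]
    rintro (rfl | rfl | rfl)
    · refine ⟨(s, v), (mem_interior_Lshape hx hy).2 (Or.inr ⟨⟨hs.1, hsX⟩, ?_, hv'⟩), ?_, ?_, ?_⟩
      exacts [haY.trans hv, hs.2.le, hv.le, hv'.le]
    · refine ⟨(s, t), (mem_interior_Lshape hx hy).2 (Or.inl ⟨⟨?_, hsX⟩, htY, ht.1⟩), ?_, ?_⟩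
      exacts [hx.trans hs.1, hs.2.le, ht.2.le]
    · refine ⟨(u, t), (mem_interior_Lshape hx hy).2 (Or.inl ⟨⟨hu, ?_⟩, htY, ht.1⟩), ⟨?_, ?_⟩, ?_⟩
      exacts [hu'.trans haX, hu.le, hu'.le, ht.2.le]

lemma cdc_Lshape_self {a : Reg} (ha : IsRegion a) {X Y : ℝ} (hX : xp a < X) (hY : Y < ym a) :
    cdc (Lshape (xm a) (xp a) X Y (ym a) (yp a)) {Tile.E, Tile.SE, Tile.S} a := by
  have hlt := ha.extent_lt
  refine cdc_Lshape_aux ha hlt.1 hlt.2 hX hY hX hY ?_ ?_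
  · exact sdiff_singleton_eq_self (by simp)
  · refine iff_of_false ?_ (by simp)
    rintro ⟨p, hp, hχ⟩
    simp only [Tile.region, mem_prod, Ix, Iy, mem_Icc] at hχ
    rcases (mem_interior_Lshape hlt.1 hlt.2).1 hp with ⟨⟨h1, -⟩, -, h2⟩ | ⟨⟨h1, -⟩, -, h2⟩ <;>
      linarith [hχ.1, hχ.2]

lemma cdc_Lshape_other {a : Reg} (ha : IsRegion a) {x₁ X Y y₁ : ℝ}
    (hx : xm a < x₁) (hy : y₁ < yp a) (hX : x₁ < X) (hY : Y < y₁) (haX : xp a < X)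
    (haY : Y < ym a) (h : x₁ < xp a ∨ ym a < y₁) :
    cdc (Lshape (xm a) x₁ X Y y₁ (yp a)) {Tile.E, Tile.SE, Tile.S, Tile.O} a := by
  have hlt := ha.extent_lt
  refine cdc_Lshape_aux ha hx hy hX hY haX haY ?_ (iff_of_true ?_ (by simp))
  · ext χ
    cases χ <;> simp
  · rcases h with h | h
    · obtain ⟨s, hs, hs'⟩ := exists_between h
      obtain ⟨v, hv, hv'⟩ := exists_between hlt.2
      refine ⟨(s, v), (mem_interior_Lshape hx hy).2 (Or.inr ⟨⟨hs, ?_⟩, ?_, hv'⟩), ⟨?_, ?_⟩, ?_, ?_⟩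
      exacts [hs'.trans haX, haY.trans hv, (hx.trans hs).le, hs'.le, hv.le, hv'.le]
    · obtain ⟨u, hu, hu'⟩ := exists_between hlt.1
      obtain ⟨t, ht, ht'⟩ := exists_between h
      refine ⟨(u, t), (mem_interior_Lshape hx hy).2 (Or.inl ⟨⟨hu, ?_⟩, ?_, ht'⟩), ⟨?_, ?_⟩, ?_, ?_⟩
      exacts [hu'.trans haX, haY.trans ht, hu.le, hu'.le, ht.le, (ht'.trans hy).le]

/-- One half of the network: the auxiliary region that meets `O(a)` but not `O(b)`. -/
lemma exists_aux_region {a b : Reg} (ha : IsRegion a) (hb : IsRegion b) (ex : xm a = xm b)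
    (ey : yp a = yp b) (h : xp b < xp a ∨ ym a < ym b) :
    ∃ c : Reg, IsConnRegion c ∧ cdc a {Tile.O} c ∧
      cdc c {Tile.E, Tile.SE, Tile.S, Tile.O} a ∧ cdc b {Tile.O} c ∧
      cdc c {Tile.E, Tile.SE, Tile.S} b := by
  have hlt := hb.extent_lt
  obtain ⟨X, hX⟩ := exists_gt (max (xp a) (xp b))
  obtain ⟨Y, hY⟩ := exists_lt (min (ym a) (ym b))
  rw [max_lt_iff] at hX
  rw [lt_min_iff] at hY
  obtain ⟨e1, e2, e3, e4⟩ := extent_Lshape hlt.1 hX.2 hY.2 hlt.2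
  refine ⟨Lshape (xm b) (xp b) X Y (ym b) (yp b), isConnRegion_Lshape hlt.1 hX.2 hY.2 hlt.2,
    cdc_O_of_MBR_subset ha ?_ ?_ ?_ ?_, ?_, cdc_O_of_MBR_subset hb ?_ ?_ ?_ ?_,
    cdc_Lshape_self hb hX.2 hY.2⟩
  · rw [e1, ex]
  · rw [e2]; exact hX.1.le
  · rw [e3]; exact hY.1.le
  · rw [e4, ey]
  · rw [← ex, ← ey]
    exact cdc_Lshape_other ha (ex ▸ hlt.1) (ey ▸ hlt.2) hX.2 hY.2 hX.1 hY.1 h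
  · rw [e1]
  · rw [e2]; exact hX.2.le
  · rw [e3]; exact hY.2.le
  · rw [e4]

lemma exists_NetULC_of_ULC {a b : Reg} (ha : IsRegion a) (hb : IsRegion b) (h : ULC a b) :
    ∃ c₁ c₂ : Reg, IsConnRegion c₁ ∧ IsConnRegion c₂ ∧ NetULC a b c₁ c₂ := by
  obtain ⟨ex, ey, kab, kba⟩ : xm a = xm b ∧ yp a = yp b ∧ (xp b < xp a ∨ ym a < ym b) ∧
      (xp a < xp b ∨ ym b < ym a) := by
    rcases h with ⟨⟨h1, h2⟩, h3, h4⟩ | ⟨⟨h1, h2⟩, h3, h4⟩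
    · exact ⟨h1, h4.symm, Or.inr h3, Or.inl h2⟩
    · exact ⟨h1.symm, h4, Or.inl h2, Or.inr h3⟩
  obtain ⟨c₁, hc₁, p1, p2, p3, p4⟩ := exists_aux_region ha hb ex ey kab
  obtain ⟨c₂, hc₂, q1, q2, q3, q4⟩ := exists_aux_region hb ha ex.symm ey.symm kba
  exact ⟨c₁, c₂, hc₁, hc₂, p1, p2, p3, p4, q1, q2, q3, q4⟩

/-- The upper-left-corner relation is definable in the CDC:
for connected regions `a, b`, `⌜(a, b)` holds iff there exist connected
regions `c₁, c₂` such that all eight basic CDC constraints of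
`N_⌜(a, b; c₁, c₂)` hold. -/
theorem stmt7 (a b : Reg) (ha : IsConnRegion a) (hb : IsConnRegion b) :
    ULC a b ↔
      ∃ c1 c2 : Reg, IsConnRegion c1 ∧ IsConnRegion c2 ∧ NetULC a b c1 c2 := by
  exact ⟨exists_NetULC_of_ULC ha.1 hb.1,
    fun ⟨_, _, hc₁, _, h⟩ => ULC_of_NetULC ha.1 hb.1 hc₁.1 h⟩
end
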